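/- arXiv:math/9412227 — 2 statements merged into one kernel-verified Lean document; each statement's English description precedes it below -/
import Mathlib

section
/- (Terminating Dixon identity.) Let n be a natural number and a, b ∈ ℂ such that (1+a−b)_k ≠ 0 and (1+a+n)_k ≠ 0 for all 0 ≤ k ≤ n, and (1+a/2)_n ≠ 0, (1+a−b)_n ≠ 0. Then ∑_{k=0}^{n} ((a)_k · (b)_k · (−n)_k)/((1+a−b)_k · (1+a+n)_k · k!) = ((1+a)_n · (1+a/2−b)_n)/((1+a/2)_n · (1+a−b)_n). -/
/-- Pochhammer symbol (shifted factorial) of a complex number. -/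
noncomputable def poch (a : ℂ) (k : ℕ) : ℂ := ∏ j ∈ Finset.range k, (a + j)

/-!
After clearing denominators the `k`-th summand becomes a polynomial `F n k` in `a` and `b`, and
Zeilberger's algorithm yields a polynomial `G n k` with

  `(a + 2n + 2) F (n + 1) k - (a + 2n + 2 - 2b) (a + 2n + 1) (a + 2n + 2) F n k`
    `= G n (k + 1) - G n k`.

Summing over `k` telescopes to a first-order recurrence in `n`, which the product side satisfies
too. Denominators are cleared first because `(1 + a + n)_n ≠ 0` does not imply
`(1 + a + (n - 1))_(n - 1) ≠ 0`, so an induction on the quotients themselves would break down.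
-/

open Finset

/-- The rising power `x (x + 1) ⋯ (x + k - 1)`, that is, `(x)_k`. -/
local notation:75 x:76 " ^↑ " k:76 => Polynomial.eval x (ascPochhammer _ k)

section Pochhammer

variable {R : Type*} [CommSemiring R]

lemma ascPochhammer_eval_eq_prod_range (k : ℕ) (x : R) :
    x ^↑ k = ∏ j ∈ range k, (x + j) := by
  induction k with
  | zero => simp
  | succ k ih => rw [ascPochhammer_succ_eval, prod_range_succ, ih]

lemma ascPochhammer_eval_add (k m : ℕ) (x : R) :
    x ^↑ (k + m) = x ^↑ k * (x + k) ^↑ m := by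
  simp [← ascPochhammer_mul]

lemma ascPochhammer_succ_eval_left (k : ℕ) (x : R) :
    x ^↑ (k + 1) = x * (x + 1) ^↑ k := by
  simp [ascPochhammer_succ_left]

lemma ascPochhammer_eval_neg_natCast {S : Type*} [Ring S] (n k : ℕ) :
    (-(n : S)) ^↑ k = (-1) ^ k * (k.factorial * n.choose k) := by
  rw [ascPochhammer_eval_neg_eq_descPochhammer, descPochhammer_eval_eq_descFactorial,
    Nat.descFactorial_eq_factorial_mul_choose, Nat.cast_mul]

end Pochhammer

section Recurrence

variable {R : Type*} [CommRing R]

/-- The `k`-th summand of Dixon's sum, multiplied by the common denominator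
`(1 + a - b)_n (1 + a + n)_n`. -/
noncomputable def dixonTerm (a b : R) (n k : ℕ) : R :=
  (-1) ^ k * n.choose k * a ^↑ k * b ^↑ k *
    ((1 + a - b + k) ^↑ (n - k) * (1 + a + n + k) ^↑ (n - k))

/-- Zeilberger's certificate for `dixonTerm`. The difference of binomial coefficients is
`n.choose (k - 1)`, read as `0` at `k = 0`. -/
noncomputable def dixonCertificate (a b : R) (n k : ℕ) : R :=
  (-1) ^ (k + 1) * ((n + 1).choose k - n.choose k) * a ^↑ k * b ^↑ k *
    ((a - b + k) ^↑ (n + 1 - k) * (1 + a + n + k) ^↑ (n + 2 - k))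

/-- The common factor of the four terms of the telescoping relation between `dixonTerm` and
`dixonCertificate`, for `n = k + m`. -/
noncomputable def dixonWeight (a b : R) (k m : ℕ) : R :=
  (-1) ^ k * a ^↑ k * b ^↑ k * ((1 + a - b + k) ^↑ m * (2 + a + 2 * k + m) ^↑ (m + 1))

lemma dixonTerm_add_succ (a b : R) (k m : ℕ) :
    dixonTerm a b (k + m + 1) k
      = dixonWeight a b k m * ((k + m + 1).choose k * (1 + a - b + k + m)) := by
  have arg_eq : 1 + a + ((k + m + 1 : ℕ) : R) + k = 2 + a + 2 * k + m := by push_cast; ring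
  rw [dixonTerm, dixonWeight, show k + m + 1 - k = m + 1 by lia, arg_eq,
    ascPochhammer_succ_eval m (1 + a - b + k)]
  ring

lemma mul_dixonTerm_add (a b : R) (k m : ℕ) :
    (a + 2 * (k + m) + 1) * (a + 2 * (k + m) + 2) * dixonTerm a b (k + m) k
      = dixonWeight a b k m * ((k + m).choose k * (1 + a + 2 * k + m)) := by
  have arg_eq : 1 + a + ((k + m : ℕ) : R) + k = 1 + a + 2 * k + m := by push_cast; ring
  have shift : (1 + a + 2 * k + m) ^↑ m * (a + 2 * (k + m) + 1) * (a + 2 * (k + m) + 2)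
      = (1 + a + 2 * k + m) * (2 + a + 2 * k + m) ^↑ (m + 1) := by
    rw [show 2 + a + 2 * k + m = 1 + a + 2 * k + m + 1 by ring, ← ascPochhammer_succ_eval_left,
      ascPochhammer_succ_eval, ascPochhammer_succ_eval]
    push_cast
    ring
  rw [dixonTerm, dixonWeight, Nat.add_sub_cancel_left, arg_eq]
  linear_combination
    ((-1) ^ k * (k + m).choose k * a ^↑ k * b ^↑ k * (1 + a - b + k) ^↑ m) * shift

lemma dixonCertificate_add_succ (a b : R) (k m : ℕ) :
    dixonCertificate a b (k + m) (k + 1)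
      = dixonWeight a b k m * ((k + m).choose k * (a + k) * (b + k)) := by
  have lower_eq : a - b + ((k + 1 : ℕ) : R) = 1 + a - b + k := by push_cast; ring
  have upper_eq : 1 + a + ((k + m : ℕ) : R) + ((k + 1 : ℕ) : R) = 2 + a + 2 * k + m := by
    push_cast; ring
  rw [dixonCertificate, dixonWeight, show k + m + 1 - (k + 1) = m by lia,
    show k + m + 2 - (k + 1) = m + 1 by lia, lower_eq, upper_eq, Nat.choose_succ_succ,
    ascPochhammer_succ_eval k a, ascPochhammer_succ_eval k b]
  push_cast
  ring

lemma dixonCertificate_add (a b : R) (k m : ℕ) :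
    dixonCertificate a b (k + m) k
      = -(dixonWeight a b k m * (((k + m + 1).choose k - (k + m).choose k) * (a - b + k)
          * (1 + a + 2 * k + m))) := by
  have arg_eq : 1 + a + ((k + m : ℕ) : R) + k = 1 + a + 2 * k + m := by push_cast; ring
  rw [dixonCertificate, dixonWeight, show k + m + 1 - k = m + 1 by lia,
    show k + m + 2 - k = m + 1 + 1 by lia, arg_eq, ascPochhammer_succ_eval_left m (a - b + k),
    ascPochhammer_succ_eval_left (m + 1) (1 + a + 2 * k + m),
    show a - b + k + 1 = 1 + a - b + k by ring,
    show 1 + a + 2 * k + m + 1 = 2 + a + 2 * k + m by ring]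
  ring

/-- The telescoping relation divided by `dixonWeight a b k m`, where `n = k + m`,
`C = n.choose k` and `C' = (n + 1).choose k`. -/
lemma dixon_contiguous (a b k m : R) {C C' : R} (h : C * (k + m + 1) = C' * (m + 1)) :
    (a + 2 * (k + m) + 2) * (C' * (1 + a - b + k + m))
        - (a + 2 * (k + m) + 2 - 2 * b) * (C * (1 + a + 2 * k + m))
      = C * (a + k) * (b + k) + (C' - C) * (a - b + k) * (1 + a + 2 * k + m) := by
  linear_combination (-(2 * a - b + 3 * k + 2 * m + 2)) * h

lemma dixonTerm_succ_sub_dixonTerm (a b : R) {n k : ℕ} (hk : k ≤ n) :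
    (a + 2 * n + 2) * dixonTerm a b (n + 1) k
        - (a + 2 * n + 2 - 2 * b) * (a + 2 * n + 1) * (a + 2 * n + 2) * dixonTerm a b n k
      = dixonCertificate a b n (k + 1) - dixonCertificate a b n k := by
  obtain ⟨m, rfl⟩ := Nat.exists_eq_add_of_le hk
  have choose_rel : ((k + m).choose k : R) * (k + m + 1) = (k + m + 1).choose k * (m + 1) := by
    have := Nat.choose_mul_succ_eq (k + m) k
    rw [show k + m + 1 - k = m + 1 by lia] at this
    exact_mod_cast congrArg (Nat.cast (R := R)) this
  rw [dixonTerm_add_succ, dixonCertificate_add_succ, dixonCertificate_add]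
  push_cast
  linear_combination dixonWeight a b k m * dixon_contiguous a b k m choose_rel
    - (a + 2 * (k + m) + 2 - 2 * b) * mul_dixonTerm_add a b k m

lemma dixonTerm_succ_self (a b : R) (n : ℕ) :
    (a + 2 * n + 2) * dixonTerm a b (n + 1) (n + 1) = -dixonCertificate a b n (n + 1) := by
  have : n + 2 - (n + 1) = 1 := by lia
  simp only [dixonTerm, dixonCertificate, this, Nat.sub_self, Nat.choose_self, Nat.choose_succ_self,
    ascPochhammer_zero, ascPochhammer_one, Polynomial.eval_one, Polynomial.eval_X]
  push_cast
  ring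

lemma dixonCertificate_zero (a b : R) (n : ℕ) : dixonCertificate a b n 0 = 0 := by
  simp [dixonCertificate]

lemma sum_dixonTerm_succ (a b : R) (n : ℕ) :
    (a + 2 * n + 2) * ∑ k ∈ range (n + 2), dixonTerm a b (n + 1) k
      = (a + 2 * n + 2 - 2 * b) * (a + 2 * n + 1) * (a + 2 * n + 2)
        * ∑ k ∈ range (n + 1), dixonTerm a b n k := by
  have telescoped := sum_congr rfl fun k (hk : k ∈ range (n + 1)) ↦
    dixonTerm_succ_sub_dixonTerm a b (mem_range_succ_iff.mp hk)
  rw [sum_range_sub, sum_sub_distrib, ← mul_sum, ← mul_sum, dixonCertificate_zero] at telescoped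
  rw [sum_range_succ]
  linear_combination telescoped + dixonTerm_succ_self a b n

end Recurrence

section Field

variable {K : Type*} [Field K]

lemma sum_dixonTerm_mul [NeZero (2 : K)] (a b : K) (n : ℕ) :
    (∑ k ∈ range (n + 1), dixonTerm a b n k) * (1 + a / 2) ^↑ n
      = (1 + a) ^↑ (2 * n) * (1 + a / 2 - b) ^↑ n := by
  obtain ⟨c, rfl⟩ : ∃ c, a = 2 * c := ⟨a / 2, (mul_div_cancel₀ a two_ne_zero).symm⟩
  rw [mul_div_cancel_left₀ c two_ne_zero]
  induction n with
  | zero => simp [dixonTerm]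
  | succ n ih =>
    apply mul_left_cancel₀ (two_ne_zero (α := K))
    rw [show 2 * (n + 1) = 2 * n + 1 + 1 by ring]
    simp only [ascPochhammer_succ_eval]
    push_cast
    linear_combination (1 + c) ^↑ n * sum_dixonTerm_succ (2 * c) b n
      + 2 * (n + 1 + c - b) * (2 * c + 2 * n + 1) * (2 * c + 2 * n + 2) * ih

lemma dixon_summand_eq_dixonTerm_div {a b : K} {n k : ℕ} (hk : k ≤ n)
    (hfac : (n.factorial : K) ≠ 0) (hb : (1 + a - b) ^↑ n ≠ 0) (hn : (1 + a + n) ^↑ n ≠ 0) :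
    a ^↑ k * b ^↑ k * (-(n : K)) ^↑ k / ((1 + a - b) ^↑ k * (1 + a + n) ^↑ k * k.factorial)
      = dixonTerm a b n k / ((1 + a - b) ^↑ n * (1 + a + n) ^↑ n) := by
  have hfac_k : (k.factorial : K) ≠ 0 :=
    ne_zero_of_dvd_ne_zero hfac (Nat.cast_dvd_cast (Nat.factorial_dvd_factorial hk))
  have split (x : K) : x ^↑ n = x ^↑ k * (x + k) ^↑ (n - k) := by
    rw [← ascPochhammer_eval_add, Nat.add_sub_cancel' hk]
  rw [split, mul_ne_zero_iff] at hb hn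
  obtain ⟨hb_k, hb_rest⟩ := hb
  obtain ⟨hn_k, hn_rest⟩ := hn
  rw [dixonTerm, ascPochhammer_eval_neg_natCast, split (1 + a - b), split (1 + a + n)]
  field_simp

theorem dixon_terminating_general [NeZero (2 : K)] (n : ℕ) (a b : K)
    (hfac : (n.factorial : K) ≠ 0) (hb : (1 + a - b) ^↑ n ≠ 0)
    (hn : (1 + a + n) ^↑ n ≠ 0) (ha : (1 + a / 2) ^↑ n ≠ 0) :
    ∑ k ∈ range (n + 1), a ^↑ k * b ^↑ k * (-(n : K)) ^↑ k /
        ((1 + a - b) ^↑ k * (1 + a + n) ^↑ k * k.factorial)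
      = (1 + a) ^↑ n * (1 + a / 2 - b) ^↑ n / ((1 + a / 2) ^↑ n * (1 + a - b) ^↑ n) := by
  have closed_form := sum_dixonTerm_mul a b n
  rw [two_mul, ascPochhammer_eval_add] at closed_form
  calc
    _ = (∑ k ∈ range (n + 1), dixonTerm a b n k) / ((1 + a - b) ^↑ n * (1 + a + n) ^↑ n) := by
      rw [sum_div]
      exact sum_congr rfl fun k hk ↦
        dixon_summand_eq_dixonTerm_div (mem_range_succ_iff.mp hk) hfac hb hn
    _ = _ := by
      rw [div_eq_div_iff (mul_ne_zero hb hn) (mul_ne_zero ha hb)]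
      linear_combination (1 + a - b) ^↑ n * closed_form

end Field

/-- Terminating Dixon identity. -/
theorem dixon_terminating (n : ℕ) (a b : ℂ)
    (h1 : ∀ k ≤ n, poch (1 + a - b) k ≠ 0)
    (h2 : ∀ k ≤ n, poch (1 + a + (n : ℂ)) k ≠ 0)
    (hn1 : poch (1 + a / 2) n ≠ 0) (hn2 : poch (1 + a - b) n ≠ 0) :
    ∑ k ∈ Finset.range (n + 1),
        poch a k * poch b k * poch (-(n : ℂ)) k /
          (poch (1 + a - b) k * poch (1 + a + (n : ℂ)) k * (k.factorial : ℂ))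
      = poch (1 + a) n * poch (1 + a / 2 - b) n /
          (poch (1 + a / 2) n * poch (1 + a - b) n) := by
  have h2n := h2 n le_rfl
  simp only [poch, ← ascPochhammer_eval_eq_prod_range] at hn1 hn2 h2n ⊢
  exact dixon_terminating_general n a b (mod_cast n.factorial_ne_zero) hn2 h2n hn1
end

section
/- (Dougall's theorem.) Let n be a natural number and a, b, c, d ∈ ℂ such that (a/2)_k, (1+a−b)_k, (1+a−c)_k, (1+a−d)_k, (b+c+d−a−n)_k, (1+a+n)_k are all nonzero for 0 ≤ k ≤ n, and (1+a−b)_n, (1+a−c)_n, (1+a−d)_n, (1+a−b−c−d)_n are nonzero. Then ∑_{k=0}^{n} [(a)_k (1+a/2)_k (b)_k (c)_k (d)_k (1+2a−b−c−d+n)_k (−n)_k] / [(a/2)_k (1+a−b)_k (1+a−c)_k (1+a−d)_k (b+c+d−a−n)_k (1+a+n)_k · k!] = [(1+a)_n (1+a−b−c)_n (1+a−b−d)_n (1+a−c−d)_n] / [(1+a−b)_n (1+a−c)_n (1+a−d)_n (1+a−b−c−d)_n]. -/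
/-!
Write `ρ x k = (x)_k / (1 + a - x)_k`. The summand is a product of seven factors `ρ x k`, and
replacing `n` by `n + 1` lowers the parameter `f = -n` by one and raises
`e = 1 + 2 * a - b - c - d - f` by one. Suitable multiples of the summands before and after this
shift differ by a telescoping term (a Wilf–Zeilberger certificate), and the boundary term is
multiplied by `(-n)_{n+1} = 0`. This is a first-order recurrence in `n` for the sum, which the
product on the right satisfies as well. The recurrence divides by quantities that the hypotheses
allow to vanish, for instance `(1 + a)_n`; but for fixed `b`, `c`, `d` they vanish only on a
countable set of `a`, so the identity holds for a dense set of `a` and extends by continuity.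
-/

open Finset

theorem poch_zero (x : ℂ) : poch x 0 = 1 := prod_range_zero _

theorem poch_succ (x : ℂ) (k : ℕ) : poch x (k + 1) = poch x k * (x + k) :=
  prod_range_succ _ k

theorem poch_succ_left (x : ℂ) (k : ℕ) : poch x (k + 1) = x * poch (x + 1) k := by
  simp only [poch, prod_range_succ', Nat.cast_add, Nat.cast_one, Nat.cast_zero, add_zero]
  rw [mul_comm]
  congr 1
  exact prod_congr rfl fun j _ ↦ by ring

theorem poch_one (k : ℕ) : poch 1 k = k.factorial := by
  simp [poch, ← prod_range_add_one_eq_factorial, add_comm]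

theorem poch_neg_natCast_succ (n : ℕ) : poch (-n) (n + 1) = 0 := by
  rw [poch_succ, neg_add_cancel, mul_zero]

theorem poch_ne_zero {x : ℂ} (hx : ∀ j : ℕ, x + j ≠ 0) (k : ℕ) : poch x k ≠ 0 :=
  prod_ne_zero_iff.2 fun j _ ↦ hx j

theorem continuous_poch (k : ℕ) : Continuous fun x ↦ poch x k := by
  unfold poch
  fun_prop

/-- The well-poised ratio `(x)_k / (1 + a - x)_k`: in a well-poised series with leading parameter
`a`, each numerator parameter `x` is paired with the denominator parameter `1 + a - x`. -/
noncomputable def wellPoised (a x : ℂ) (k : ℕ) : ℂ := poch x k / poch (1 + a - x) k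

theorem wellPoised_zero (a x : ℂ) : wellPoised a x 0 = 1 := by
  simp [wellPoised, poch_zero]

theorem wellPoised_succ (a x : ℂ) (k : ℕ) :
    wellPoised a x (k + 1) = wellPoised a x k * ((x + k) / (1 + a - x + k)) := by
  simp only [wellPoised, poch_succ, mul_div_mul_comm]

theorem wellPoised_sub_one_succ {a x : ℂ} (hx : ∀ j : ℕ, 1 + a - x + j ≠ 0) (k : ℕ) :
    wellPoised a (x - 1) (k + 1) = wellPoised a x k *
      ((x - 1) * (1 + a - x) / ((1 + a - x + k) * (1 + a - x + (k + 1)))) := by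
  have hx₀ : 1 + a - x ≠ 0 := by simpa using hx 0
  have hk : 1 + a - x + k ≠ 0 := hx k
  have hk' : 1 + a - x + (k + 1) ≠ 0 := mod_cast hx (k + 1)
  have hnum : poch (x - 1) (k + 1) = (x - 1) * poch x k := by
    rw [poch_succ_left, sub_add_cancel]
  have hden : poch (1 + a - (x - 1)) (k + 1) =
      poch (1 + a - x) k * (1 + a - x + k) * (1 + a - x + (k + 1)) / (1 + a - x) := by
    rw [eq_div_iff hx₀, mul_comm, show 1 + a - (x - 1) = 1 + a - x + 1 by ring,
      ← poch_succ_left, poch_succ, poch_succ, Nat.cast_add_one]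
  have := poch_ne_zero hx k
  rw [wellPoised, wellPoised, hnum, hden]
  field_simp

theorem wellPoised_add_one_succ {a x : ℂ} (hx : x ≠ 0) (k : ℕ) :
    wellPoised a (x + 1) (k + 1) = wellPoised a x k *
      ((x + k) * (x + (k + 1)) / (x * (a - x))) := by
  have hnum : poch (x + 1) (k + 1) = poch x k * (x + k) * (x + (k + 1)) / x := by
    rw [eq_div_iff hx, mul_comm, ← poch_succ_left, poch_succ, poch_succ, Nat.cast_add_one]
  have hden : poch (1 + a - (x + 1)) (k + 1) = (a - x) * poch (1 + a - x) k := by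
    rw [show 1 + a - (x + 1) = a - x by ring, poch_succ_left, show a - x + 1 = 1 + a - x by ring]
  rw [wellPoised, wellPoised, hnum, hden]
  field_simp

theorem continuousAt_wellPoised {x : ℂ → ℂ} {a : ℂ} {k : ℕ} (hx : ContinuousAt x a)
    (h : poch (1 + a - x a) k ≠ 0) : ContinuousAt (fun y ↦ wellPoised y (x y) k) a := by
  have hpoch {y : ℂ → ℂ} (hy : ContinuousAt y a) : ContinuousAt (fun z ↦ poch (y z) k) a :=
    (continuous_poch k).continuousAt.comp hy
  exact (hpoch hx).div (hpoch (by fun_prop)) h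

/-- The `k`-th term of the very-well-poised ₇F₆ series at `1` with numerator parameters `a`,
`1 + a / 2`, `b`, `c`, `d`, `e` and `f`. Dougall's sum is the case `f = -n`,
`e = 1 + 2 * a - b - c - d + n`. -/
noncomputable def veryWellPoised (a b c d e f : ℂ) (k : ℕ) : ℂ :=
  wellPoised a a k * wellPoised a (1 + a / 2) k * wellPoised a b k * wellPoised a c k *
    wellPoised a d k * wellPoised a e k * wellPoised a f k

theorem veryWellPoised_neg_natCast (a b c d : ℂ) (n k : ℕ) :
    veryWellPoised a b c d (1 + 2 * a - b - c - d + n) (-n) k =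
      poch a k * poch (1 + a / 2) k * poch b k * poch c k * poch d k *
          poch (1 + 2 * a - b - c - d + n) k * poch (-n) k /
        (poch (a / 2) k * poch (1 + a - b) k * poch (1 + a - c) k * poch (1 + a - d) k *
          poch (b + c + d - a - n) k * poch (1 + a + n) k * k.factorial) := by
  have hhalf : 1 + a - (1 + a / 2) = a / 2 := by ring
  have he : 1 + a - (1 + 2 * a - b - c - d + n) = b + c + d - a - n := by ring
  simp only [veryWellPoised, wellPoised, hhalf, he, sub_neg_eq_add, add_sub_cancel_right,
    div_mul_div_comm, poch_one]
  ac_rfl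

theorem veryWellPoised_zero (a b c d e f : ℂ) : veryWellPoised a b c d e f 0 = 1 := by
  simp only [veryWellPoised, wellPoised_zero, mul_one]

theorem veryWellPoised_neg_natCast_succ (a b c d e : ℂ) (n : ℕ) :
    veryWellPoised a b c d e (-n) (n + 1) = 0 := by
  simp [veryWellPoised, wellPoised, poch_neg_natCast_succ]

theorem wellPoised_one_add_half_succ (a : ℂ) (k : ℕ) :
    wellPoised a (1 + a / 2) (k + 1) =
      wellPoised a (1 + a / 2) k * ((a + 2 * (k + 1)) / (a + 2 * k)) := by
  have hnum : a + 2 * (k + 1) = 2 * (1 + a / 2 + k) := by ring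
  have hden : a + 2 * k = 2 * (1 + a - (1 + a / 2) + k) := by ring
  rw [wellPoised_succ, hnum, hden, mul_div_mul_left _ _ two_ne_zero]

theorem veryWellPoised_succ {a e e' f f' r s : ℂ} {k : ℕ} (b c d : ℂ)
    (he : wellPoised a e' (k + 1) = wellPoised a e k * r)
    (hf : wellPoised a f' (k + 1) = wellPoised a f k * s) :
    veryWellPoised a b c d e' f' (k + 1) =
      veryWellPoised a b c d e f k * ((a + k) * (b + k) * (c + k) * (d + k) / (a + 2 * k)) *
        ((a + 2 * (k + 1)) / ((1 + k) * (1 + a - b + k) * (1 + a - c + k) * (1 + a - d + k)) *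
          (r * s)) := by
  rw [veryWellPoised, he, hf, wellPoised_one_add_half_succ]
  simp only [veryWellPoised, wellPoised_succ, add_sub_cancel_right, div_eq_mul_inv, mul_inv]
  ac_rfl

-- The induction step of `sum_veryWellPoised_contiguous` after clearing denominators.
theorem veryWellPoised_certificate {a b c d e f : ℂ} (h : b + c + d + e + f = 1 + 2 * a) (m : ℂ) :
    (1 + e - f) * (1 + m) * (1 + a - b + m) * (1 + a - c + m) * (1 + a - d + m) *
          (1 + a - f + (m + 1)) * (1 + a - e + m) +
        (a + 2 * (m + 1)) *
          ((1 + a - b - f) * (1 + a - c - f) * (1 + a - d - f) * (e + (m + 1)) * (f - 1) *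
              (1 + a - e + m) +
            e * (1 + a - f + (m + 1)) * (1 + a - b - c - f) * (1 + a - b - d - f) *
              (1 + a - c - d - f) * (f + m)) =
      (1 + e - f) * (e + (m + 1)) * (f + m) * (a + (m + 1)) * (b + (m + 1)) * (c + (m + 1)) *
        (d + (m + 1)) := by
  obtain rfl : d = 1 + 2 * a - b - c - e - f := by linear_combination h
  ring

theorem sum_veryWellPoised_contiguous {a b c d e f : ℂ} (h : b + c + d + e + f = 1 + 2 * a)
    (ha : ∀ j : ℕ, a + j ≠ 0) (hb : ∀ j : ℕ, 1 + a - b + j ≠ 0)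
    (hc : ∀ j : ℕ, 1 + a - c + j ≠ 0) (hd : ∀ j : ℕ, 1 + a - d + j ≠ 0) (he₀ : e ≠ 0)
    (he : ∀ j : ℕ, a - e + j ≠ 0) (hf : ∀ j : ℕ, 1 + a - f + j ≠ 0) (m : ℕ) :
    ∑ k ∈ range (m + 1),
      ((1 + a - b - f) * (1 + a - c - f) * (1 + a - d - f) * (a - e) *
          veryWellPoised a b c d (e + 1) (f - 1) k +
        (1 + a - f) * (1 + a - b - c - f) * (1 + a - b - d - f) * (1 + a - c - d - f) *
          veryWellPoised a b c d e f k) =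
      veryWellPoised a b c d e f m *
          ((a + m) * (b + m) * (c + m) * (d + m) / (a + 2 * m)) *
        ((e + m) * (1 + a - f) * (1 + e - f) / (e * (1 + a - f + m))) := by
  induction m with
  | zero =>
    have ha₀ : a ≠ 0 := by simpa using ha 0
    have hf₀ : 1 + a - f ≠ 0 := by simpa using hf 0
    simp only [zero_add, sum_range_one, veryWellPoised_zero, Nat.cast_zero, add_zero, mul_zero]
    field_simp
    obtain rfl : e = 1 + 2 * a - b - c - d - f := by linear_combination h
    ring
  | succ m ih =>
    have hm : 1 + (m : ℂ) ≠ 0 := mod_cast (by lia : 1 + m ≠ 0)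
    have ham : a + 2 * (m + 1) ≠ 0 := mod_cast ha (2 * (m + 1))
    have hbm := hb m
    have hcm := hc m
    have hdm := hd m
    have hae : a - e ≠ 0 := by simpa using he 0
    have hem : 1 + a - e + m ≠ 0 := fun hj ↦ he (m + 1) (by push_cast; linear_combination hj)
    have hfm := hf m
    have hfm' : 1 + a - f + (m + 1) ≠ 0 := mod_cast hf (m + 1)
    rw [sum_range_succ, ih,
      veryWellPoised_succ b c d (wellPoised_add_one_succ he₀ m) (wellPoised_sub_one_succ hf m),
      veryWellPoised_succ b c d (wellPoised_succ a e m) (wellPoised_succ a f m), Nat.cast_add_one]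
    generalize veryWellPoised a b c d e f m *
      ((a + m) * (b + m) * (c + m) * (d + m) / (a + 2 * m)) = w
    field_simp
    rw [veryWellPoised_certificate h]
    simp only [mul_assoc]

theorem sum_veryWellPoised_recurrence {a b c d e : ℂ} (n : ℕ)
    (h : b + c + d + e = 1 + 2 * a + n) (ha : ∀ j : ℕ, a + j ≠ 0)
    (hb : ∀ j : ℕ, 1 + a - b + j ≠ 0) (hc : ∀ j : ℕ, 1 + a - c + j ≠ 0)
    (hd : ∀ j : ℕ, 1 + a - d + j ≠ 0) (he₀ : e ≠ 0) (he : ∀ j : ℕ, a - e + j ≠ 0) :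
    (1 + a - b + n) * (1 + a - c + n) * (1 + a - d + n) * (e - a) *
        ∑ k ∈ range (n + 2), veryWellPoised a b c d (e + 1) (-(n + 1 : ℕ)) k =
      (1 + a + n) * (1 + a - b - c + n) * (1 + a - b - d + n) * (1 + a - c - d + n) *
        ∑ k ∈ range (n + 1), veryWellPoised a b c d e (-n) k := by
  have hn (j : ℕ) : 1 + a - -(n : ℂ) + j ≠ 0 := fun hj ↦
    ha (1 + n + j) (by push_cast; linear_combination hj)
  have key := sum_veryWellPoised_contiguous (f := -n) (by linear_combination h)
    ha hb hc hd he₀ he hn (n + 1)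
  rw [veryWellPoised_neg_natCast_succ, zero_mul, zero_mul, sum_add_distrib, ← mul_sum, ← mul_sum,
    sum_range_succ _ (n + 1), sum_range_succ (veryWellPoised a b c d e (-n)) (n + 1),
    veryWellPoised_neg_natCast_succ, add_zero] at key
  rw [sum_range_succ, Nat.cast_add_one, neg_add']
  linear_combination -key

/-- The right-hand side of Dougall's theorem. -/
noncomputable def dougallProduct (a b c d : ℂ) (n : ℕ) : ℂ :=
  poch (1 + a) n * poch (1 + a - b - c) n * poch (1 + a - b - d) n * poch (1 + a - c - d) n /
    (poch (1 + a - b) n * poch (1 + a - c) n * poch (1 + a - d) n * poch (1 + a - b - c - d) n)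

theorem dougallProduct_succ (a b c d : ℂ) (n : ℕ) :
    dougallProduct a b c d (n + 1) = dougallProduct a b c d n *
      ((1 + a + n) * (1 + a - b - c + n) * (1 + a - b - d + n) * (1 + a - c - d + n) /
        ((1 + a - b + n) * (1 + a - c + n) * (1 + a - d + n) * (1 + a - b - c - d + n))) := by
  simp only [dougallProduct, poch_succ, div_mul_div_comm, mul_mul_mul_comm]

/-- The parameters for which no shifted factorial met in the induction on `n` can vanish. -/
structure IsGeneric (a b c d : ℂ) : Prop where
  leading : ∀ j : ℤ, a ≠ j
  sub_b : ∀ j : ℤ, a ≠ b + j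
  sub_c : ∀ j : ℤ, a ≠ c + j
  sub_d : ∀ j : ℤ, a ≠ d + j
  sub_sum : ∀ j : ℤ, a ≠ b + c + d + j
  two_mul_sub_sum : ∀ j : ℤ, a ≠ (b + c + d + j) / 2

theorem dense_setOf_isGeneric (b c d : ℂ) : Dense {a | IsGeneric a b c d} := by
  have hcountable : (⋃ j : ℤ, {(j : ℂ), b + j, c + j, d + j, b + c + d + j,
      (b + c + d + j) / 2}).Countable :=
    Set.countable_iUnion fun _ ↦ (Set.toFinite _).countable
  refine (hcountable.dense_compl ℂ).mono fun a ha ↦ ?_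
  simp only [Set.mem_compl_iff, Set.mem_iUnion, Set.mem_insert_iff, Set.mem_singleton_iff,
    not_exists, not_or, forall_and] at ha
  obtain ⟨h₁, h₂, h₃, h₄, h₅, h₆⟩ := ha
  exact ⟨h₁, h₂, h₃, h₄, h₅, h₆⟩

theorem IsGeneric.sum_veryWellPoised {a b c d : ℂ} (h : IsGeneric a b c d) (n : ℕ) :
    ∑ k ∈ range (n + 1), veryWellPoised a b c d (1 + 2 * a - b - c - d + n) (-n) k =
      dougallProduct a b c d n := by
  have ha (j : ℕ) : a + j ≠ 0 := fun hj ↦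
    h.leading (-j) (by push_cast; linear_combination hj)
  have hb (j : ℕ) : 1 + a - b + j ≠ 0 := fun hj ↦
    h.sub_b (-1 - j) (by push_cast; linear_combination hj)
  have hc (j : ℕ) : 1 + a - c + j ≠ 0 := fun hj ↦
    h.sub_c (-1 - j) (by push_cast; linear_combination hj)
  have hd (j : ℕ) : 1 + a - d + j ≠ 0 := fun hj ↦
    h.sub_d (-1 - j) (by push_cast; linear_combination hj)
  induction n with
  | zero => simp [veryWellPoised_zero, dougallProduct, poch_zero]
  | succ n ih =>
    have he₀ : 1 + 2 * a - b - c - d + n ≠ 0 := fun hj ↦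
      h.two_mul_sub_sum (-1 - n) (by push_cast; linear_combination hj / 2)
    have he (j : ℕ) : a - (1 + 2 * a - b - c - d + n) + j ≠ 0 := fun hj ↦
      h.sub_sum (j - 1 - n) (by push_cast; linear_combination -hj)
    have hs : 1 + a - b - c - d + n ≠ 0 := fun hj ↦ he 0 (by push_cast; linear_combination -hj)
    have hrec := sum_veryWellPoised_recurrence n (by ring) ha hb hc hd he₀ he
    rw [ih, show 1 + 2 * a - b - c - d + n - a = 1 + a - b - c - d + n by ring] at hrec
    have hden := mul_ne_zero (mul_ne_zero (mul_ne_zero (hb n) (hc n)) (hd n)) hs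
    rw [dougallProduct_succ, mul_div_assoc', eq_div_iff hden, Nat.cast_add_one, ← add_assoc,
      ← Nat.cast_add_one]
    linear_combination hrec

theorem continuousAt_veryWellPoised {a b c d : ℂ} {e : ℂ → ℂ} {f : ℂ} {k : ℕ}
    (he : ContinuousAt e a) (h₁ : poch (a / 2) k ≠ 0) (h₂ : poch (1 + a - b) k ≠ 0)
    (h₃ : poch (1 + a - c) k ≠ 0) (h₄ : poch (1 + a - d) k ≠ 0)
    (h₅ : poch (1 + a - e a) k ≠ 0) (h₆ : poch (1 + a - f) k ≠ 0) :
    ContinuousAt (fun x ↦ veryWellPoised x b c d (e x) f k) a := by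
  have hfact : poch (1 + a - a) k ≠ 0 := by
    rw [add_sub_cancel_right, poch_one]
    exact_mod_cast k.factorial_ne_zero
  have hhalf : poch (1 + a - (1 + a / 2)) k ≠ 0 := by
    rwa [show 1 + a - (1 + a / 2) = a / 2 by ring]
  unfold veryWellPoised
  exact ((((((continuousAt_wellPoised (by fun_prop) hfact).fun_mul
    (continuousAt_wellPoised (by fun_prop) hhalf)).fun_mul
    (continuousAt_wellPoised (by fun_prop) h₂)).fun_mul
    (continuousAt_wellPoised (by fun_prop) h₃)).fun_mul
    (continuousAt_wellPoised (by fun_prop) h₄)).fun_mul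
    (continuousAt_wellPoised he h₅)).fun_mul
    (continuousAt_wellPoised (by fun_prop) h₆)

theorem continuousAt_dougallProduct {a b c d : ℂ} {n : ℕ} (h₁ : poch (1 + a - b) n ≠ 0)
    (h₂ : poch (1 + a - c) n ≠ 0) (h₃ : poch (1 + a - d) n ≠ 0)
    (h₄ : poch (1 + a - b - c - d) n ≠ 0) :
    ContinuousAt (fun x ↦ dougallProduct x b c d n) a := by
  unfold dougallProduct
  have := continuous_poch n
  fun_prop (disch := simp [*])

/-- Dougall's theorem (terminating very-well-poised ₇F₆ summation). -/
theorem dougall (n : ℕ) (a b c d : ℂ)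
    (h1 : ∀ k ≤ n, poch (a / 2) k ≠ 0)
    (h2 : ∀ k ≤ n, poch (1 + a - b) k ≠ 0)
    (h3 : ∀ k ≤ n, poch (1 + a - c) k ≠ 0)
    (h4 : ∀ k ≤ n, poch (1 + a - d) k ≠ 0)
    (h5 : ∀ k ≤ n, poch (b + c + d - a - (n : ℂ)) k ≠ 0)
    (h6 : ∀ k ≤ n, poch (1 + a + (n : ℂ)) k ≠ 0)
    (hn1 : poch (1 + a - b) n ≠ 0) (hn2 : poch (1 + a - c) n ≠ 0)
    (hn3 : poch (1 + a - d) n ≠ 0) (hn4 : poch (1 + a - b - c - d) n ≠ 0) :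
    ∑ k ∈ Finset.range (n + 1),
        poch a k * poch (1 + a / 2) k * poch b k * poch c k * poch d k *
            poch (1 + 2 * a - b - c - d + (n : ℂ)) k * poch (-(n : ℂ)) k /
          (poch (a / 2) k * poch (1 + a - b) k * poch (1 + a - c) k *
            poch (1 + a - d) k * poch (b + c + d - a - (n : ℂ)) k *
            poch (1 + a + (n : ℂ)) k * (k.factorial : ℂ))
      = poch (1 + a) n * poch (1 + a - b - c) n * poch (1 + a - b - d) n *
          poch (1 + a - c - d) n /
          (poch (1 + a - b) n * poch (1 + a - c) n * poch (1 + a - d) n *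
            poch (1 + a - b - c - d) n) := by
  have key : ∑ k ∈ range (n + 1), veryWellPoised a b c d (1 + 2 * a - b - c - d + n) (-n) k =
      dougallProduct a b c d n := by
    refine tendsto_nhds_unique_of_frequently_eq (tendsto_finsetSum _ fun k hk ↦ ?_)
      (continuousAt_dougallProduct hn1 hn2 hn3 hn4)
      ((mem_closure_iff_frequently.1 (dense_setOf_isGeneric b c d a)).mono
        fun x hx ↦ hx.sum_veryWellPoised n)
    have hkn : k ≤ n := mem_range_succ_iff.1 hk
    refine continuousAt_veryWellPoised (by fun_prop) (h1 k hkn) (h2 k hkn) (h3 k hkn) (h4 k hkn)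
      ?_ ?_
    · convert h5 k hkn using 2
      ring
    · simpa using h6 k hkn
  simpa only [veryWellPoised_neg_natCast, dougallProduct] using key
end
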